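/- (Round-trip efficiency, Section V-C.) Fix η ∈ [0, 1] and modify the single-storage feasibility by replacing the charging constraint S (t+1) − S t ≤ p⁺ t with S (t+1) − S t ≤ η · p⁺ t. For 0 ≤ S0, the value function v(S̄, x̄) (infimum of V over modified-feasible profiles) is antitone in S̄ on {S̄ : S̄ ≥ S0} for each fixed x̄ ≥ 0, and antitone in x̄ on [0, ∞) for each fixed S̄ ≥ S0. Hence the non-negativity of the storage MRI is preserved under round-trip efficiency. -/

import Mathlib

/-!
Relaxing a capacity enlarges the set of feasible profiles, and an infimum can only drop when taken
over a larger set. Since `sInf` on `ℝ` is `0` on sets that are empty or unbounded below, two facts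
keep these infima meaningful: the discharge limits bound the objective below, whatever the
capacities, and the idle storage is feasible.
-/

/-- Feasibility with round-trip efficiency `η` applied to charging:
`S 0 = S0`, `0 ≤ S (t+1) ≤ S̄`, `|S (t+1) − S t| ≤ x̄`,
`−p⁻ t ≤ S (t+1) − S t`, and `S (t+1) − S t ≤ η · p⁺ t`. -/
def FeasibleRTE (T : ℕ) (pp pm : Fin T → ℝ) (eta S0 Sb xb : ℝ)
    (S : Fin (T + 1) → ℝ) : Prop :=
  S 0 = S0 ∧ ∀ t : Fin T,
    (0 ≤ S t.succ ∧ S t.succ ≤ Sb) ∧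
    |S t.succ - S t.castSucc| ≤ xb ∧
    (-(pm t) ≤ S t.succ - S t.castSucc ∧ S t.succ - S t.castSucc ≤ eta * pp t)

/-- The objective `V(S) = ∑ₜ min 0 (S (t+1) − S t)`. -/
noncomputable def V (T : ℕ) (S : Fin (T + 1) → ℝ) : ℝ :=
  ∑ t : Fin T, min 0 (S t.succ - S t.castSucc)

/-- The set of feasible profiles `S`, the domain of the minimization defining the value function. -/
def feasibleProfiles {T : ℕ} (pp pm : Fin T → ℝ) (eta S0 Sb xb : ℝ) : Set (Fin (T + 1) → ℝ) :=
  {S | FeasibleRTE T pp pm eta S0 Sb xb S}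

/-- The value function `v(S̄, x̄)`, as a real infimum: it is `0` when no profile is feasible. -/
noncomputable def optimalValue {T : ℕ} (pp pm : Fin T → ℝ) (eta S0 Sb xb : ℝ) : ℝ :=
  sInf (V T '' feasibleProfiles pp pm eta S0 Sb xb)

section

variable {T : ℕ} {pp pm : Fin T → ℝ} {eta S0 Sb Sb' xb xb' : ℝ}

theorem FeasibleRTE.mono {S : Fin (T + 1) → ℝ} (h : FeasibleRTE T pp pm eta S0 Sb xb S)
    (hSb : Sb ≤ Sb') (hxb : xb ≤ xb') : FeasibleRTE T pp pm eta S0 Sb' xb' S :=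
  ⟨h.1, fun t =>
    have ⟨⟨nonneg, le_capacity⟩, le_power, limits⟩ := h.2 t
    ⟨⟨nonneg, le_capacity.trans hSb⟩, le_power.trans hxb, limits⟩⟩

theorem feasibleProfiles_mono (hSb : Sb ≤ Sb') (hxb : xb ≤ xb') :
    feasibleProfiles pp pm eta S0 Sb xb ⊆ feasibleProfiles pp pm eta S0 Sb' xb' :=
  fun _ hS => FeasibleRTE.mono hS hSb hxb

theorem feasibleRTE_const (hcharge : ∀ t, 0 ≤ eta * pp t) (hpm : ∀ t, 0 ≤ pm t)
    (hS0 : 0 ≤ S0) (hSb : S0 ≤ Sb) (hxb : 0 ≤ xb) :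
    FeasibleRTE T pp pm eta S0 Sb xb (fun _ => S0) := by
  refine ⟨rfl, fun t => ⟨⟨hS0, hSb⟩, ?_⟩⟩
  simpa only [sub_self, abs_zero, neg_nonpos] using ⟨hxb, hpm t, hcharge t⟩

theorem Ici_prod_Ici_subset_nonempty_feasibleProfiles (hcharge : ∀ t, 0 ≤ eta * pp t)
    (hpm : ∀ t, 0 ≤ pm t) (hS0 : 0 ≤ S0) :
    Set.Ici S0 ×ˢ Set.Ici 0 ⊆
      {c : ℝ × ℝ | (feasibleProfiles pp pm eta S0 c.1 c.2).Nonempty} :=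
  fun _ hc => ⟨fun _ => S0, feasibleRTE_const hcharge hpm hS0 hc.1 hc.2⟩

theorem FeasibleRTE.sum_min_le_V {S : Fin (T + 1) → ℝ}
    (h : FeasibleRTE T pp pm eta S0 Sb xb S) : ∑ t, min 0 (-(pm t)) ≤ V T S :=
  Finset.sum_le_sum fun t _ => min_le_min_left 0 (h.2 t).2.2.1

theorem bddBelow_V_image_feasibleProfiles :
    BddBelow (V T '' feasibleProfiles pp pm eta S0 Sb xb) :=
  ⟨∑ t, min 0 (-(pm t)), Set.forall_mem_image.2 fun _ hS => FeasibleRTE.sum_min_le_V hS⟩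

theorem optimalValue_antitone_RTE_general :
    AntitoneOn (fun c : ℝ × ℝ => optimalValue pp pm eta S0 c.1 c.2)
      {c | (feasibleProfiles pp pm eta S0 c.1 c.2).Nonempty} :=
  fun _ hc _ _ hcc' => csInf_le_csInf bddBelow_V_image_feasibleProfiles (hc.image _)
    (Set.image_mono (feasibleProfiles_mono hcc'.1 hcc'.2))

end

/-- Section V-C (round-trip efficiency): the value function `v(S̄, x̄)` is
antitone in `S̄` on `{S̄ : S̄ ≥ S0}` for each fixed `x̄ ≥ 0`, and antitone
in `x̄` on `[0, ∞)` for each fixed `S̄ ≥ S0`; so the non-negativity of the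
storage MRI is preserved under round-trip efficiency. -/
theorem optimalValue_antitone_RTE (T : ℕ) (pp pm : Fin T → ℝ)
    (hpp : ∀ t, 0 ≤ pp t) (hpm : ∀ t, 0 ≤ pm t)
    (eta : ℝ) (heta0 : 0 ≤ eta) (heta1 : eta ≤ 1)
    (S0 : ℝ) (hS0 : 0 ≤ S0) :
    (∀ xb : ℝ, 0 ≤ xb →
      AntitoneOn
        (fun Sb => sInf {r : ℝ | ∃ S : Fin (T + 1) → ℝ,
          FeasibleRTE T pp pm eta S0 Sb xb S ∧ V T S = r})
        {Sb : ℝ | S0 ≤ Sb}) ∧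
    (∀ Sb : ℝ, S0 ≤ Sb →
      AntitoneOn
        (fun xb => sInf {r : ℝ | ∃ S : Fin (T + 1) → ℝ,
          FeasibleRTE T pp pm eta S0 Sb xb S ∧ V T S = r})
        (Set.Ici (0 : ℝ))) := by
  have hanti := optimalValue_antitone_RTE_general.mono
    (Ici_prod_Ici_subset_nonempty_feasibleProfiles (fun t => mul_nonneg heta0 (hpp t)) hpm hS0)
  exact ⟨fun _ hxb _ hSb _ hSb' h =>
      hanti (Set.mk_mem_prod hSb hxb) (Set.mk_mem_prod hSb' hxb) (Prod.mk_le_mk_iff_left.2 h),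
    fun _ hSb _ hxb _ hxb' h =>
      hanti (Set.mk_mem_prod hSb hxb) (Set.mk_mem_prod hSb hxb') (Prod.mk_le_mk_iff_right.2 h)⟩
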